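/- There exists a universal constant C > 0 such that whenever k < (2^ℓ/√6)^{4/7}, the distribution Q_k(s_0,...,s_k) = Pr(s_0) · ∫_{U(D)} ∏_{i=1}^k ⟨y^i_{s_0...s_i}| U σ^{i−1}_{s_0...s_{i−1}} U† |y^i_{s_0...s_i}⟩ λ^i_{s_0...s_i} dU (with dU the Haar probability measure on the group U(D) of D×D complex unitary matrices) satisfies ∑_{(s_0,...,s_k) ∈ {1,...,D_m}^{k+1}} |P_k(s_0,...,s_k) − Q_k(s_0,...,s_k)| ≤ C · k³ / 2^ℓ. -/

import Mathlib

open MeasureTheory Matrix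
open scoped ComplexOrder

noncomputable instance {m n : Type*} : MeasurableSpace (Matrix m n ℂ) :=
  inferInstanceAs (MeasurableSpace (m → n → ℂ))

/-!
Left invariance of `μ` yields a recursion (Schwinger–Dyson equation) for the moments
`∫ ∏ᵢ (aᵢ U xᵢ)(zᵢ U† bᵢ) dμ(U)` over the unitary group, while the permanents given by Wick's
formula satisfy the recursion obtained by dropping the terms of relative size `k / D`. Comparing
the two, when `4 k² ≤ D` the rescaled moment differs from the permanent by at most `4 k² / D`
times the permanent of the overlaps `|aⱼ bᵢ|`. Decomposing the states spectrally,
`Dᵏ ∫ ∏ᵢ ⟨yᵢ|U σᵢ U†|yᵢ⟩ dμ(U)` is thus `1` up to the sum of `∏ᵢ |⟨yᵢ|y_{π i}⟩|` over the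
permutations `π ≠ 1` and, relative to one plus that sum, an error `O(k² / D)`. After averaging over
the outcomes, from the last to the first, every point moved by `π` contributes a factor
`D ^ (-1/2)`, so that the sum is of order `k² / D` as well. When `4 k² > D` the trivial bound `2`
suffices.
-/

section CompactGroup

variable {G E : Type*} [TopologicalSpace G] [CompactSpace G] [MeasurableSpace G]
  [NormedAddCommGroup E] {μ : Measure G} [IsFiniteMeasure μ]

lemma integrable_of_continuous_of_compactSpace [OpensMeasurableSpace G] {f : G → E}
    (hf : Continuous f) : Integrable f μ :=
  hf.integrable_of_hasCompactSupport (HasCompactSupport.of_compactSpace f)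

/- Left invariance makes `t ↦ ∫ f (γ t * g) dμ` constant, and compactness allows differentiating
it under the integral sign. -/
lemma integral_eq_zero_of_hasDerivAt_mul_left [BorelSpace G] [Group G] [ContinuousMul G]
    [μ.IsMulLeftInvariant] [NormedSpace ℝ E] {f f' : G → E} (hf : Continuous f)
    (hf' : Continuous f') {γ : ℝ → G}
    (hderiv : ∀ t g, HasDerivAt (fun t => f (γ t * g)) (f' (γ t * g)) t) : ∫ g, f' g ∂μ = 0 := by
  obtain ⟨C, hC⟩ := isCompact_univ.exists_bound_of_continuousOn hf'.continuousOn
  have hint {h : G → E} (hh : Continuous h) (t : ℝ) : Integrable (fun g => h (γ t * g)) μ :=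
    integrable_of_continuous_of_compactSpace (hh.comp (continuous_const_mul (γ t)))
  have key := (hasDerivAt_integral_of_dominated_loc_of_deriv_le (μ := μ) (bound := fun _ => C)
    (x₀ := 0) Filter.univ_mem (.of_forall fun t => (hint hf t).aestronglyMeasurable) (hint hf 0)
    (hint hf' 0).aestronglyMeasurable
    (.of_forall fun g t _ => hC (γ t * g) (Set.mem_univ _)) (integrable_const C)
    (.of_forall fun g t _ => hderiv t g)).2
  simp only [integral_mul_left_eq_self] at key
  exact key.unique (hasDerivAt_const 0 _)

end CompactGroup

instance {m n : Type*} [Countable m] [Countable n] : BorelSpace (Matrix m n ℂ) :=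
  inferInstanceAs (BorelSpace (m → n → ℂ))

instance {d : Type*} [Fintype d] [DecidableEq d] : CompactSpace (unitaryGroup d ℂ) := by
  refine isCompact_iff_compactSpace.mp (IsCompact.of_isClosed_subset
    (isCompact_univ_pi fun _ => isCompact_univ_pi fun _ => isCompact_closedBall (0 : ℂ) 1)
    (isClosed_unitary : IsClosed (unitary (Matrix d d ℂ) : Set (Matrix d d ℂ))) ?_)
  intro U hU i _ j _
  simpa using entry_norm_bound_of_unitary hU i j

section Monomial

variable {d ι κ : Type*} [Fintype d] [Fintype ι] [Fintype κ]

/-- The monomial `∏ᵢ (aᵢ U xᵢ) ∏ⱼ (zⱼ U† bⱼ)` in the entries of `U` and of its adjoint. The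
vectors `aᵢ` and `zⱼ` act as row vectors, without conjugation. -/
def unitaryMonomial (a x : ι → d → ℂ) (z b : κ → d → ℂ) (U : Matrix d d ℂ) : ℂ :=
  (∏ i, a i ⬝ᵥ U *ᵥ x i) * ∏ j, z j ⬝ᵥ Uᴴ *ᵥ b j

lemma continuous_unitaryMonomial (a x : ι → d → ℂ) (z b : κ → d → ℂ) :
    Continuous (unitaryMonomial a x z b) := by
  unfold unitaryMonomial
  fun_prop

section Update

variable (a x : ι → d → ℂ) (z b : κ → d → ℂ) (U : Matrix d d ℂ)

lemma unitaryMonomial_update_left [DecidableEq ι] (i : ι) (v : d → ℂ) :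
    unitaryMonomial (Function.update a i v) x z b U =
      (v ⬝ᵥ U *ᵥ x i) *
        ((∏ l ∈ Finset.univ.erase i, a l ⬝ᵥ U *ᵥ x l) * ∏ j, z j ⬝ᵥ Uᴴ *ᵥ b j) := by
  simp only [unitaryMonomial, Function.apply_update (fun l w => w ⬝ᵥ U *ᵥ x l),
    Finset.prod_update_of_mem (Finset.mem_univ i), Finset.sdiff_singleton_eq_erase, mul_assoc]

lemma unitaryMonomial_update_right [DecidableEq κ] (j : κ) (v : d → ℂ) :
    unitaryMonomial a x z (Function.update b j v) U =
      (z j ⬝ᵥ Uᴴ *ᵥ v) *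
        ((∏ i, a i ⬝ᵥ U *ᵥ x i) * ∏ l ∈ Finset.univ.erase j, z l ⬝ᵥ Uᴴ *ᵥ b l) := by
  simp only [unitaryMonomial, Function.apply_update (fun l w => z l ⬝ᵥ Uᴴ *ᵥ w),
    Finset.prod_update_of_mem (Finset.mem_univ j), Finset.sdiff_singleton_eq_erase,
    mul_left_comm]

lemma sum_mul_unitaryMonomial_update_single [DecidableEq d] [DecidableEq ι] (i : ι) (c : d → ℂ) :
    ∑ e, c e * unitaryMonomial (Function.update a i (Pi.single e 1)) x z b U =
      unitaryMonomial (Function.update a i c) x z b U := by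
  simp only [unitaryMonomial_update_left, ← mul_assoc, ← Finset.sum_mul, single_one_dotProduct]
  rfl

lemma unitaryMonomial_smul_update_left [DecidableEq ι] (i : ι) (c : ℂ) (v : d → ℂ) :
    unitaryMonomial (Function.update a i (c • v)) x z b U =
      c * unitaryMonomial (Function.update a i v) x z b U := by
  simp only [unitaryMonomial_update_left, smul_dotProduct, smul_eq_mul, mul_assoc]

lemma unitaryMonomial_smul_update_right [DecidableEq κ] (j : κ) (c : ℂ) (v : d → ℂ) :
    unitaryMonomial a x z (Function.update b j (c • v)) U =
      c * unitaryMonomial a x z (Function.update b j v) U := by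
  simp only [unitaryMonomial_update_right, mulVec_smul, dotProduct_smul, smul_eq_mul, mul_assoc]

end Update

lemma unitaryMonomial_removeNth {m n : ℕ} (a x : Fin (m + 1) → d → ℂ)
    (z b : Fin (n + 1) → d → ℂ) (p : Fin (m + 1)) (q : Fin (n + 1)) (U : Matrix d d ℂ) :
    unitaryMonomial a x z b U = (a p ⬝ᵥ U *ᵥ x p) * (z q ⬝ᵥ Uᴴ *ᵥ b q) *
      unitaryMonomial (p.removeNth a) (p.removeNth x) (q.removeNth z) (q.removeNth b) U := by
  simp only [unitaryMonomial, Fin.prod_univ_succAbove _ p, Fin.prod_univ_succAbove _ q,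
    mul_mul_mul_comm, Fin.removeNth_apply]

variable [DecidableEq ι] [DecidableEq κ]

/-- The derivative of `unitaryMonomial a x z b` at `U` in the direction `A * U`, for `A`
skew-Hermitian. As defined, it is `ℂ`-linear in `A`. -/
def leftVariation (a x : ι → d → ℂ) (z b : κ → d → ℂ) (A U : Matrix d d ℂ) : ℂ :=
  ∑ i, unitaryMonomial (Function.update a i (a i ᵥ* A)) x z b U -
    ∑ j, unitaryMonomial a x z (Function.update b j (A *ᵥ b j)) U

lemma continuous_leftVariation (a x : ι → d → ℂ) (z b : κ → d → ℂ) (A : Matrix d d ℂ) :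
    Continuous (leftVariation a x z b A) :=
  .sub (continuous_finsetSum _ fun _ _ => continuous_unitaryMonomial ..)
    (continuous_finsetSum _ fun _ _ => continuous_unitaryMonomial ..)

lemma leftVariation_add (a x : ι → d → ℂ) (z b : κ → d → ℂ) (A B U : Matrix d d ℂ) :
    leftVariation a x z b (A + B) U = leftVariation a x z b A U + leftVariation a x z b B U := by
  simp only [leftVariation, unitaryMonomial_update_left, unitaryMonomial_update_right, vecMul_add,
    add_mulVec, mulVec_add, add_dotProduct, dotProduct_add, add_mul, Finset.sum_add_distrib]
  ring

lemma leftVariation_smul (a x : ι → d → ℂ) (z b : κ → d → ℂ) (c : ℂ) (A U : Matrix d d ℂ) :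
    leftVariation a x z b (c • A) U = c * leftVariation a x z b A U := by
  simp only [leftVariation, vecMul_smul, smul_mulVec, unitaryMonomial_smul_update_left,
    unitaryMonomial_smul_update_right, ← Finset.mul_sum, mul_sub]

open scoped Matrix.Norms.L2Operator in
lemma hasDerivAt_dotProduct_mulVec {W : ℝ → Matrix d d ℂ} {W' : Matrix d d ℂ} {t : ℝ}
    (hW : HasDerivAt W W' t) (u v : d → ℂ) :
    HasDerivAt (fun s => u ⬝ᵥ W s *ᵥ v) (u ⬝ᵥ W' *ᵥ v) t := by
  classical
  let L : Matrix d d ℂ →ₗ[ℝ] ℂ :=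
    { toFun M := u ⬝ᵥ M *ᵥ v
      map_add' M N := by rw [add_mulVec, dotProduct_add]
      map_smul' c M := by rw [smul_mulVec, dotProduct_smul, RingHom.id_apply] }
  exact L.toContinuousLinearMap.hasFDerivAt.comp_hasDerivAt t hW

open scoped Matrix.Norms.L2Operator in
lemma hasDerivAt_unitaryMonomial (a x : ι → d → ℂ) (z b : κ → d → ℂ)
    {A : Matrix d d ℂ} (hA : A ∈ skewAdjoint (Matrix d d ℂ)) {W : ℝ → Matrix d d ℂ} {t : ℝ}
    (hW : HasDerivAt W (A * W t) t) :
    HasDerivAt (fun s => unitaryMonomial a x z b (W s)) (leftVariation a x z b A (W t)) t := by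
  classical
  have hleft (i : ι) : HasDerivAt (fun s => a i ⬝ᵥ W s *ᵥ x i) ((a i ᵥ* A) ⬝ᵥ W t *ᵥ x i) t := by
    convert hasDerivAt_dotProduct_mulVec hW (a i) (x i) using 1
    rw [← mulVec_mulVec, ← dotProduct_mulVec]
  have hright (j : κ) :
      HasDerivAt (fun s => z j ⬝ᵥ (W s)ᴴ *ᵥ b j) (-(z j ⬝ᵥ (W t)ᴴ *ᵥ (A *ᵥ b j))) t := by
    have hA' : Aᴴ = -A := hA
    have h := hasDerivAt_dotProduct_mulVec hW.star (z j) (b j)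
    rwa [star_eq_conjTranspose, conjTranspose_mul, hA', mul_neg, neg_mulVec, dotProduct_neg,
      ← mulVec_mulVec] at h
  refine ((HasDerivAt.fun_finsetProd (u := Finset.univ) fun i _ => hleft i).fun_mul
    (HasDerivAt.fun_finsetProd (u := Finset.univ) fun j _ => hright j)).congr_deriv ?_
  simp only [leftVariation, unitaryMonomial_update_left, unitaryMonomial_update_right,
    smul_eq_mul, mul_neg, Finset.sum_neg_distrib, ← sub_eq_add_neg, Finset.sum_mul, Finset.mul_sum]
  congr 1 <;> exact Finset.sum_congr rfl fun _ _ => by ring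

end Monomial

section Moment

variable {d ι κ : Type*} [Fintype d] [DecidableEq d] [Fintype ι] [Fintype κ]

/-- The moment `∫ ∏ᵢ (aᵢ U xᵢ) ∏ⱼ (zⱼ U† bⱼ) dμ(U)` of a measure on the unitary group. -/
noncomputable def unitaryMoment (μ : Measure (unitaryGroup d ℂ)) (a x : ι → d → ℂ)
    (z b : κ → d → ℂ) : ℂ :=
  ∫ U : unitaryGroup d ℂ, unitaryMonomial a x z b U ∂μ

variable {μ : Measure (unitaryGroup d ℂ)} [IsFiniteMeasure μ]

lemma integrable_unitaryMonomial (a x : ι → d → ℂ) (z b : κ → d → ℂ) :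
    Integrable (fun U : unitaryGroup d ℂ => unitaryMonomial a x z b U) μ :=
  integrable_of_continuous_of_compactSpace
    ((continuous_unitaryMonomial a x z b).comp continuous_subtype_val)

variable [DecidableEq ι] [DecidableEq κ]

lemma integrable_leftVariation (a x : ι → d → ℂ) (z b : κ → d → ℂ) (A : Matrix d d ℂ) :
    Integrable (fun U : unitaryGroup d ℂ => leftVariation a x z b A U) μ :=
  integrable_of_continuous_of_compactSpace
    ((continuous_leftVariation a x z b A).comp continuous_subtype_val)

variable [μ.IsMulLeftInvariant]

open scoped Matrix.Norms.L2Operator in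
lemma integral_leftVariation_of_mem_skewAdjoint (a x : ι → d → ℂ) (z b : κ → d → ℂ)
    {A : Matrix d d ℂ} (hA : A ∈ skewAdjoint (Matrix d d ℂ)) :
    ∫ U : unitaryGroup d ℂ, leftVariation a x z b A U ∂μ = 0 := by
  let +nondep : NormedAlgebra ℚ (Matrix d d ℂ) := .restrictScalars ℚ ℂ _
  let γ (t : ℝ) : unitaryGroup d ℂ :=
    ⟨NormedSpace.exp (t • A), NormedSpace.exp_mem_unitary_of_mem_skewAdjoint
      (skewAdjoint.smul_mem t hA)⟩
  refine integral_eq_zero_of_hasDerivAt_mul_left (γ := γ)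
    (f := fun U : unitaryGroup d ℂ => unitaryMonomial a x z b U)
    ((continuous_unitaryMonomial a x z b).comp continuous_subtype_val)
    ((continuous_leftVariation a x z b A).comp continuous_subtype_val) fun t U => ?_
  refine hasDerivAt_unitaryMonomial a x z b hA ?_
  simpa only [Submonoid.coe_mul, ← mul_assoc] using
    (hasDerivAt_exp_smul_const' A t).mul_const (U : Matrix d d ℂ)

/- Both sides are complex linear in `A`, and the skew-Hermitian matrices span all matrices. -/
lemma integral_leftVariation (a x : ι → d → ℂ) (z b : κ → d → ℂ) (A : Matrix d d ℂ) :
    ∫ U : unitaryGroup d ℂ, leftVariation a x z b A U ∂μ = 0 := by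
  have hself {B : Matrix d d ℂ} (hB : IsSelfAdjoint B) :
      ∫ U : unitaryGroup d ℂ, leftVariation a x z b B U ∂μ = 0 := by
    have h := integral_leftVariation_of_mem_skewAdjoint (μ := μ) a x z b
      (hB.smul_mem_skewAdjoint (r := Complex.I) Complex.conj_I)
    simpa only [leftVariation_smul, integral_const_mul, mul_eq_zero, Complex.I_ne_zero,
      false_or] using h
  rw [← realPart_add_I_smul_imaginaryPart A]
  simp only [leftVariation_add, leftVariation_smul]
  rw [integral_add (integrable_leftVariation ..) ((integrable_leftVariation ..).const_mul _),
    integral_const_mul, hself (realPart A).2, hself (imaginaryPart A).2, mul_zero, add_zero]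

end Moment

section SchwingerDyson

variable {d ι κ : Type*} [Fintype d] [DecidableEq d] [Fintype ι] [Fintype κ]

lemma sum_unitaryMonomial_update_vecMul_single [DecidableEq ι]
    (a x : ι → d → ℂ) (z b : κ → d → ℂ) (p : ι) (U : Matrix d d ℂ) :
    ∑ e, ∑ i, unitaryMonomial
        (Function.update (Function.update a p (Pi.single e 1)) i
          (Function.update a p (Pi.single e 1) i ᵥ* vecMulVec (Pi.single e 1) (a p))) x z b U =
      Fintype.card d * unitaryMonomial a x z b U +
        ∑ i ∈ Finset.univ.erase p, unitaryMonomial (a ∘ Equiv.swap p i) x z b U := by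
  rw [Finset.sum_comm, ← Finset.add_sum_erase _ _ (Finset.mem_univ p)]
  congr 1
  · simp only [Function.update_self, vecMul_vecMulVec, dotProduct_single_one,
      Pi.single_eq_same, one_smul, Function.update_idem, Function.update_eq_self, Finset.sum_const,
      Finset.card_univ, nsmul_eq_mul]
  · refine Finset.sum_congr rfl fun i hi => ?_
    have hip := Finset.ne_of_mem_erase hi
    rw [Equiv.comp_swap_eq_update, ← sum_mul_unitaryMonomial_update_single]
    refine Finset.sum_congr rfl fun e _ => ?_
    rw [Function.update_of_ne hip, vecMul_vecMulVec, dotProduct_single_one,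
      unitaryMonomial_smul_update_left, Function.update_comm hip.symm]

lemma sum_unitaryMonomial_update_mulVec_single {m n : ℕ} (a x : Fin (m + 1) → d → ℂ)
    (z b : Fin (n + 1) → d → ℂ) (p : Fin (m + 1)) {U : Matrix d d ℂ} (hU : U ∈ unitaryGroup d ℂ) :
    ∑ e, ∑ q, unitaryMonomial (Function.update a p (Pi.single e 1)) x z
        (Function.update b q (vecMulVec (Pi.single e 1) (a p) *ᵥ b q)) U =
      ∑ q, (a p ⬝ᵥ b q) * (z q ⬝ᵥ x p) *
        unitaryMonomial (p.removeNth a) (p.removeNth x) (q.removeNth z) (q.removeNth b) U := by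
  rw [Finset.sum_comm]
  refine Finset.sum_congr rfl fun q _ => ?_
  have hcontract : ∑ e, (Pi.single e 1 ⬝ᵥ U *ᵥ x p) * (z q ⬝ᵥ Uᴴ *ᵥ Pi.single e 1) =
      z q ⬝ᵥ x p := by
    simp only [dotProduct_mulVec (z q), dotProduct_single_one, single_one_dotProduct,
      mul_comm ((U *ᵥ x p) _)]
    change (z q ᵥ* Uᴴ) ⬝ᵥ (U *ᵥ x p) = _
    rw [← dotProduct_mulVec, mulVec_mulVec, ← star_eq_conjTranspose,
      mem_unitaryGroup_iff'.mp hU, one_mulVec]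
  simp only [vecMulVec_mulVec, op_smul_eq_smul, unitaryMonomial_smul_update_right, ← Finset.mul_sum]
  simp only [unitaryMonomial_removeNth _ x z _ p q, Function.update_self, Fin.removeNth_update]
  rw [← Finset.sum_mul, hcontract, mul_assoc]

/- Schwinger–Dyson equation: sum the vanishing variations in the directions `e (a p)`, with the
row vector `a p` replaced by `e`, over the basis vectors `e`. -/
lemma card_mul_unitaryMoment_add_sum_swap {m n : ℕ} {μ : Measure (unitaryGroup d ℂ)}
    [IsFiniteMeasure μ] [μ.IsMulLeftInvariant] (a x : Fin (m + 1) → d → ℂ)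
    (z b : Fin (n + 1) → d → ℂ) (p : Fin (m + 1)) :
    Fintype.card d * unitaryMoment μ a x z b +
        ∑ i ∈ Finset.univ.erase p, unitaryMoment μ (a ∘ Equiv.swap p i) x z b =
      ∑ q, (a p ⬝ᵥ b q) * (z q ⬝ᵥ x p) *
        unitaryMoment μ (p.removeNth a) (p.removeNth x) (q.removeNth z) (q.removeNth b) := by
  have hvar : ∑ e, ∫ U : unitaryGroup d ℂ,
      leftVariation (Function.update a p (Pi.single e 1)) x z b
        (vecMulVec (Pi.single e 1) (a p)) U ∂μ = 0 :=
    Finset.sum_eq_zero fun e _ => integral_leftVariation ..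
  rw [← integral_finsetSum _ fun e _ => integrable_leftVariation ..] at hvar
  simp only [leftVariation, Finset.sum_sub_distrib, sum_unitaryMonomial_update_vecMul_single,
    sum_unitaryMonomial_update_mulVec_single _ _ _ _ _ (Subtype.prop _)] at hvar
  have hint {m n : ℕ} (a x : Fin m → d → ℂ) (z b : Fin n → d → ℂ) (c : ℂ) :
      Integrable (fun U : unitaryGroup d ℂ => c * unitaryMonomial a x z b U) μ :=
    (integrable_unitaryMonomial ..).const_mul c
  have hint' (i : Fin (m + 1)) := integrable_unitaryMonomial (μ := μ) (a ∘ Equiv.swap p i) x z b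
  rw [integral_sub ((hint ..).fun_add (integrable_finsetSum _ fun i _ => hint' i))
      (integrable_finsetSum _ fun q _ => hint ..),
    integral_add (hint ..) (integrable_finsetSum _ fun i _ => hint' i),
    integral_finsetSum _ fun i _ => hint' i, integral_finsetSum _ fun q _ => hint ..] at hvar
  simp only [integral_const_mul] at hvar
  exact sub_eq_zero.mp hvar

end SchwingerDyson

section Permanent

lemma permanent_succ_column_zero {R : Type*} [CommSemiring R] {n : ℕ}
    (M : Matrix (Fin (n + 1)) (Fin (n + 1)) R) :
    M.permanent = ∑ i, M i 0 * (M.submatrix i.succAbove Fin.succ).permanent := by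
  have hswap (i : Fin (n + 1)) : (M.submatrix i.succAbove Fin.succ).permanent =
      (M.submatrix (Equiv.swap 0 i ∘ Fin.succ) Fin.succ).permanent := by
    cases i using Fin.cases with
    | zero => simp only [Equiv.swap_self, Equiv.coe_refl, Function.id_comp, Fin.succAbove_zero]
    | succ i =>
      rw [← permanent_permute_cols i.cycleRange, submatrix_submatrix]
      congr 2
      exact funext fun j => Fin.succAbove_cycleRange i j
  simp only [hswap]
  simp only [permanent, Finset.mul_sum, submatrix_apply, Function.comp_apply]
  rw [← Equiv.Perm.decomposeFin.symm.sum_comp, Fintype.sum_prod_type]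
  refine Finset.sum_congr rfl fun i _ => Finset.sum_congr rfl fun τ _ => ?_
  simp only [Fin.prod_univ_succ, Equiv.Perm.decomposeFin_symm_apply_zero,
    Equiv.Perm.decomposeFin_symm_apply_succ]

lemma norm_permanent_le {R n : Type*} [NormedCommRing R] [NormOneClass R] [DecidableEq n]
    [Fintype n] (M : Matrix n n R) : ‖M.permanent‖ ≤ (M.map (‖·‖)).permanent :=
  (norm_sum_le _ _).trans (Finset.sum_le_sum fun _ _ => Finset.norm_prod_le _ _)

lemma norm_permanent_sub_prod_diag_le {R n : Type*} [NormedCommRing R] [NormOneClass R]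
    [DecidableEq n] [Fintype n] (M : Matrix n n R) :
    ‖M.permanent - ∏ i, M i i‖ ≤
      ∑ σ ∈ Finset.univ.erase (1 : Equiv.Perm n), ∏ i, ‖M (σ i) i‖ := by
  rw [permanent, ← Finset.add_sum_erase _ _ (Finset.mem_univ 1)]
  simp only [Equiv.Perm.one_apply, add_sub_cancel_left]
  exact norm_sum_le_of_le _ fun σ _ => Finset.norm_prod_le _ _

end Permanent

section PermanentalApproximation

variable {d ι : Type*} [Fintype d] [Fintype ι] [DecidableEq ι]

/-- The Gaussian counterpart of `unitaryMoment`: the value of the moment by Wick's formula when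
the unitary is replaced by a matrix of independent standard complex Gaussian entries. -/
def gaussianMoment (a x z b : ι → d → ℂ) : ℂ :=
  (of fun i j => (a j ⬝ᵥ b i) * (z i ⬝ᵥ x j)).permanent

/-- The permanent of the absolute values of the pairings `aⱼ ⬝ᵥ bᵢ`, which controls both the
Gaussian moments and the error of the Gaussian approximation. -/
noncomputable def overlapPermanent (a b : ι → d → ℂ) : ℝ :=
  (of fun i j => ‖a j ⬝ᵥ b i‖).permanent

lemma overlapPermanent_comp_perm (a b : ι → d → ℂ) (π : Equiv.Perm ι) :
    overlapPermanent (a ∘ π) b = overlapPermanent a b :=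
  permanent_permute_rows π (of fun i j => ‖a j ⬝ᵥ b i‖)

lemma overlapPermanent_nonneg (a b : ι → d → ℂ) : 0 ≤ overlapPermanent a b := by
  simp only [overlapPermanent, permanent, of_apply]
  positivity

lemma norm_gaussianMoment_le {a x z b : ι → d → ℂ} (hzx : ∀ i j, ‖z i ⬝ᵥ x j‖ ≤ 1) :
    ‖gaussianMoment a x z b‖ ≤ overlapPermanent a b := by
  refine (norm_permanent_le _).trans ?_
  simp only [overlapPermanent, permanent, map_apply, of_apply, norm_mul]
  gcongr
  exact mul_le_of_le_one_right (norm_nonneg _) (hzx _ _)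

variable {n : ℕ}

lemma gaussianMoment_succ (a x z b : Fin (n + 1) → d → ℂ) :
    gaussianMoment a x z b = ∑ q, (a 0 ⬝ᵥ b q) * (z q ⬝ᵥ x 0) *
      gaussianMoment (Fin.removeNth 0 a) (Fin.removeNth 0 x) (q.removeNth z) (q.removeNth b) :=
  permanent_succ_column_zero _

lemma overlapPermanent_succ (a b : Fin (n + 1) → d → ℂ) :
    overlapPermanent a b =
      ∑ q, ‖a 0 ⬝ᵥ b q‖ * overlapPermanent (Fin.removeNth 0 a) (q.removeNth b) :=
  permanent_succ_column_zero _

variable [DecidableEq d]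

/-- The error of the Gaussian approximation to a moment of the unitary group. The moment is
rescaled because the entries of a unitary have size `D ^ (-1/2)`, the Gaussian ones size `1`. -/
noncomputable def momentError (μ : Measure (unitaryGroup d ℂ)) (a x z b : ι → d → ℂ) : ℂ :=
  (Fintype.card d : ℂ) ^ Fintype.card ι * unitaryMoment μ a x z b - gaussianMoment a x z b

variable {μ : Measure (unitaryGroup d ℂ)} [IsFiniteMeasure μ] [μ.IsMulLeftInvariant]

lemma card_mul_momentError (a x z b : Fin (n + 1) → d → ℂ) :
    Fintype.card d * momentError μ a x z b =
      Fintype.card d * ∑ q, (a 0 ⬝ᵥ b q) * (z q ⬝ᵥ x 0) * momentError μ (Fin.removeNth 0 a)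
        (Fin.removeNth 0 x) (q.removeNth z) (q.removeNth b) -
      ∑ i ∈ Finset.univ.erase 0, (momentError μ (a ∘ Equiv.swap 0 i) x z b +
        gaussianMoment (a ∘ Equiv.swap 0 i) x z b) := by
  have hsd := congrArg ((Fintype.card d : ℂ) ^ (n + 1) * ·)
    (card_mul_unitaryMoment_add_sum_swap (μ := μ) a x z b 0)
  simp only [mul_add, Finset.mul_sum] at hsd
  simp only [momentError, sub_add_cancel, Fintype.card_fin, gaussianMoment_succ a, mul_sub,
    Finset.mul_sum, Finset.sum_sub_distrib]
  have hscale (r w : ℂ) : (Fintype.card d : ℂ) ^ (n + 1) * (r * w) =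
      Fintype.card d * (r * ((Fintype.card d : ℂ) ^ n * w)) := by ring
  simp only [hscale] at hsd
  linear_combination hsd

lemma card_mul_norm_momentError_le {a x z b : Fin (n + 1) → d → ℂ} {c : ℝ}
    (hzx : ∀ i j, ‖z i ⬝ᵥ x j‖ ≤ 1)
    (hmax : ∀ i, ‖momentError μ (a ∘ Equiv.swap 0 i) x z b‖ ≤ ‖momentError μ a x z b‖)
    (htail : ∀ q : Fin (n + 1), ‖momentError μ (Fin.removeNth 0 a) (Fin.removeNth 0 x)
      (q.removeNth z) (q.removeNth b)‖ ≤ c * overlapPermanent (Fin.removeNth 0 a) (q.removeNth b)) :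
    Fintype.card d * ‖momentError μ a x z b‖ ≤
      Fintype.card d * (c * overlapPermanent a b) +
        n * (‖momentError μ a x z b‖ + overlapPermanent a b) := by
  rw [← Complex.norm_natCast, ← norm_mul, card_mul_momentError]
  refine (norm_sub_le _ _).trans (add_le_add ?_ ?_)
  · rw [norm_mul, overlapPermanent_succ, Finset.mul_sum]
    gcongr
    refine (norm_sum_le _ _).trans (Finset.sum_le_sum fun q _ => ?_)
    rw [norm_mul, norm_mul, mul_left_comm]
    gcongr
    · exact mul_le_of_le_one_right (norm_nonneg _) (hzx q 0)
    · exact htail q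
  · refine (norm_sum_le_of_le _ fun i _ => (norm_add_le _ _).trans (add_le_add (hmax i)
      ((norm_gaussianMoment_le hzx).trans_eq (overlapPermanent_comp_perm a b _)))).trans_eq ?_
    simp only [Finset.sum_const, Finset.mem_univ, Finset.card_erase_of_mem, Finset.card_univ,
      Fintype.card_fin, add_tsub_cancel_right, nsmul_eq_mul]

lemma le_of_mul_le_mul_add_mul_add {m S D n : ℝ} (hn : 0 ≤ n) (hS : 0 ≤ S)
    (hD : 4 * (n + 1) ^ 2 ≤ D) (h : D * m ≤ 4 * n ^ 2 * S + n * (m + S)) :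
    m ≤ 4 * (n + 1) ^ 2 / D * S := by
  have hm2 : m ≤ 2 * S := le_of_mul_le_mul_right (a := D - n) (by nlinarith) (by nlinarith)
  rw [div_mul_eq_mul_div, le_div_iff₀ (by nlinarith)]
  nlinarith

omit [IsFiniteMeasure μ] in
/- Permuting the `a i` does not change `overlapPermanent a b`, so it suffices to treat the
permutation with the largest error, for which the recursion closes up. -/
lemma norm_momentError_le [IsProbabilityMeasure μ] {a x z b : Fin n → d → ℂ}
    (hn : 4 * (n : ℝ) ^ 2 ≤ Fintype.card d) (hzx : ∀ i j, ‖z i ⬝ᵥ x j‖ ≤ 1) :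
    ‖momentError μ a x z b‖ ≤ 4 * (n : ℝ) ^ 2 / Fintype.card d * overlapPermanent a b := by
  induction n with
  | zero => simp [momentError, unitaryMoment, unitaryMonomial, gaussianMoment, permanent]
  | succ n ih =>
    push_cast at hn ⊢
    have hn' : 4 * (n : ℝ) ^ 2 ≤ Fintype.card d := hn.trans' (by gcongr; linarith)
    have hcard : (Fintype.card d : ℝ) ≠ 0 := by nlinarith [(Nat.cast_nonneg n : (0 : ℝ) ≤ n)]
    obtain ⟨π, hπ⟩ := Finite.exists_max fun π : Equiv.Perm (Fin (n + 1)) =>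
      ‖momentError μ (a ∘ π) x z b‖
    have hrec := card_mul_norm_momentError_le (a := a ∘ π)
      (c := 4 * (n : ℝ) ^ 2 / Fintype.card d) hzx (fun i => hπ (π * Equiv.swap 0 i))
      fun q => ih hn' fun i j => hzx _ _
    rw [overlapPermanent_comp_perm, ← mul_assoc, mul_div_cancel₀ _ hcard] at hrec
    exact (hπ 1).trans (le_of_mul_le_mul_add_mul_add n.cast_nonneg
      (overlapPermanent_nonneg a b) hn hrec)

end PermanentalApproximation

section DensityMatrix

variable {d : Type*} [Fintype d]

/-- A density matrix: a positive semidefinite matrix of trace one. -/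
structure IsDensityMatrix (ρ : Matrix d d ℂ) : Prop where
  posSemidef : ρ.PosSemidef
  trace_eq_one : ρ.trace = 1

lemma IsDensityMatrix.exists_eq_sum_vecMulVec {ρ : Matrix d d ℂ} (hρ : IsDensityMatrix ρ) :
    ∃ (p : d → ℝ) (u : d → d → ℂ), (∀ j, 0 ≤ p j) ∧ ∑ j, p j = 1 ∧
      (∀ j, star (u j) ⬝ᵥ u j = 1) ∧ ρ = ∑ j, (p j : ℂ) • vecMulVec (u j) (star (u j)) := by
  classical
  have hherm := hρ.posSemidef.isHermitian
  refine ⟨hherm.eigenvalues, (hherm.eigenvectorUnitary : Matrix d d ℂ).col,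
    hρ.posSemidef.eigenvalues_nonneg, ?_, fun j => ?_, ?_⟩
  · apply Complex.ofReal_injective
    rw [Complex.ofReal_sum, Complex.ofReal_one, ← hρ.trace_eq_one, hherm.trace_eq_sum_eigenvalues]
    rfl
  · have h := congrFun (congrFun (mem_unitaryGroup_iff'.mp hherm.eigenvectorUnitary.2) j) j
    rwa [one_apply_eq] at h
  · conv_lhs => rw [hherm.spectral_theorem, Unitary.conjStarAlgAut_apply]
    ext i j
    rw [mul_apply]
    simp only [mul_diagonal, Matrix.sum_apply, Matrix.smul_apply, vecMulVec_apply,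
      Pi.star_apply, smul_eq_mul, star_apply, Function.comp_apply, col_apply, mul_assoc]
    exact Finset.sum_congr rfl fun _ _ => mul_left_comm ..

lemma IsDensityMatrix.unitary_conj [DecidableEq d] {ρ : Matrix d d ℂ} (hρ : IsDensityMatrix ρ)
    (U : unitaryGroup d ℂ) : IsDensityMatrix (U.1 * ρ * U.1ᴴ) where
  posSemidef := hρ.posSemidef.mul_mul_conjTranspose_same U.1
  trace_eq_one := by
    rw [trace_mul_comm, ← mul_assoc, ← star_eq_conjTranspose, mem_unitaryGroup_iff'.mp U.2,
      one_mul, hρ.trace_eq_one]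

lemma star_dotProduct_self (v : d → ℂ) : star v ⬝ᵥ v = ((∑ i, ‖v i‖ ^ 2 : ℝ) : ℂ) := by
  simp [dotProduct, Complex.conj_mul']

lemma norm_star_dotProduct_comm (u v : d → ℂ) : ‖star u ⬝ᵥ v‖ = ‖star v ⬝ᵥ u‖ := by
  rw [← norm_star (star u ⬝ᵥ v), ← star_dotProduct_star, star_star, dotProduct_comm]

lemma norm_star_dotProduct_le_one {u v : d → ℂ} (hu : star u ⬝ᵥ u = 1) (hv : star v ⬝ᵥ v = 1) :
    ‖star u ⬝ᵥ v‖ ≤ 1 := by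
  have hnorm {w : d → ℂ} (hw : star w ⬝ᵥ w = 1) : ‖WithLp.toLp 2 w‖ = 1 := by
    rw [star_dotProduct_self, Complex.ofReal_eq_one] at hw
    rw [EuclideanSpace.norm_eq, hw, Real.sqrt_one]
  have h := norm_inner_le_norm (𝕜 := ℂ) (WithLp.toLp 2 u) (WithLp.toLp 2 v)
  rwa [EuclideanSpace.inner_eq_star_dotProduct, dotProduct_comm, hnorm hu, hnorm hv, one_mul] at h

end DensityMatrix

section OutcomeDensity

variable {d ι : Type*} [Fintype d] [Fintype ι]

/-- The product `∏ᵢ ⟨yᵢ| U ρᵢ U† |yᵢ⟩`: up to weights, the probability of the outcomes `yᵢ` when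
the states `ρᵢ` are measured after applying `U`. -/
def outcomeDensity (y : ι → d → ℂ) (ρ : ι → Matrix d d ℂ) (U : Matrix d d ℂ) : ℂ :=
  ∏ i, star (y i) ⬝ᵥ (U * ρ i * Uᴴ) *ᵥ y i

lemma star_dotProduct_conj_sum_vecMulVec_mulVec {J : Type*} [Fintype J] (y : d → ℂ) (p : J → ℂ)
    (u : J → d → ℂ) (U : Matrix d d ℂ) :
    star y ⬝ᵥ (U * (∑ j, p j • vecMulVec (u j) (star (u j))) * Uᴴ) *ᵥ y =
      ∑ j, p j * ((star y ⬝ᵥ U *ᵥ u j) * (star (u j) ⬝ᵥ Uᴴ *ᵥ y)) := by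
  simp only [← mulVec_mulVec, sum_mulVec, mulVec_sum, dotProduct_sum, smul_mulVec, mulVec_smul,
    dotProduct_smul, vecMulVec_mulVec, op_smul_eq_smul, smul_eq_mul,
    mul_comm (star y ⬝ᵥ U *ᵥ u _)]

lemma outcomeDensity_sum_vecMulVec [DecidableEq ι] {J : Type*} [Fintype J] (y : ι → d → ℂ)
    (p : ι → J → ℂ) (u : ι → J → d → ℂ) (U : Matrix d d ℂ) :
    outcomeDensity y (fun i => ∑ j, p i j • vecMulVec (u i j) (star (u i j))) U =
      ∑ f : ι → J, (∏ i, p i (f i)) *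
        unitaryMonomial (star y) (fun i => u i (f i)) (star fun i => u i (f i)) y U := by
  simp only [outcomeDensity, star_dotProduct_conj_sum_vecMulVec_mulVec, Fintype.prod_sum,
    Finset.prod_mul_distrib, unitaryMonomial, Pi.star_apply]

/-- The overlaps of the vectors `y` along all nontrivial permutations, which vanish when `y` is an
orthogonal family. -/
noncomputable def permutedOverlap [DecidableEq ι] (y : ι → d → ℂ) : ℝ :=
  ∑ σ ∈ Finset.univ.erase (1 : Equiv.Perm ι), ∏ i, ‖star (y i) ⬝ᵥ y (σ i)‖

lemma overlapPermanent_star_self [DecidableEq ι] {y : ι → d → ℂ}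
    (hy : ∀ i, star (y i) ⬝ᵥ y i = 1) :
    overlapPermanent (star y) y = 1 + permutedOverlap y := by
  simp only [overlapPermanent, permanent, of_apply, Pi.star_apply]
  rw [← Finset.add_sum_erase _ _ (Finset.mem_univ 1), permutedOverlap]
  simp only [Equiv.Perm.one_apply, hy, norm_one, Finset.prod_const_one]

variable [DecidableEq d] {μ : Measure (unitaryGroup d ℂ)} [IsProbabilityMeasure μ]
  [μ.IsMulLeftInvariant] {k : ℕ}

lemma norm_card_pow_mul_unitaryMoment_sub_one_le (hk : 4 * (k : ℝ) ^ 2 ≤ Fintype.card d)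
    {y u : Fin k → d → ℂ} (hy : ∀ i, star (y i) ⬝ᵥ y i = 1) (hu : ∀ i, star (u i) ⬝ᵥ u i = 1) :
    ‖(Fintype.card d : ℂ) ^ k * unitaryMoment μ (star y) u (star u) y - 1‖ ≤
      4 * (k : ℝ) ^ 2 / Fintype.card d * (1 + permutedOverlap y) + permutedOverlap y := by
  have hunit (i j : Fin k) : ‖(star u) i ⬝ᵥ u j‖ ≤ 1 := norm_star_dotProduct_le_one (hu i) (hu j)
  rw [← overlapPermanent_star_self hy]
  refine (norm_sub_le_norm_sub_add_norm_sub _ (gaussianMoment (star y) u (star u) y) _).trans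
    (add_le_add ?_ ?_)
  · simpa only [momentError, Fintype.card_fin] using norm_momentError_le (μ := μ) hk hunit
  · have hdiag : ∏ i, (of fun i j => ((star y) j ⬝ᵥ y i) * ((star u) i ⬝ᵥ u j)) i i = 1 :=
      Finset.prod_eq_one fun i _ => by simp only [of_apply, Pi.star_apply, hy, hu, mul_one]
    refine (hdiag ▸ norm_permanent_sub_prod_diag_le _).trans ?_
    simp only [of_apply, norm_mul, permutedOverlap]
    gcongr
    exact mul_le_of_le_one_right (norm_nonneg _) (hunit _ _)

lemma norm_card_pow_mul_integral_outcomeDensity_sub_one_le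
    (hk : 4 * (k : ℝ) ^ 2 ≤ Fintype.card d) {y : Fin k → d → ℂ}
    (hy : ∀ i, star (y i) ⬝ᵥ y i = 1) {ρ : Fin k → Matrix d d ℂ} (hρ : ∀ i, IsDensityMatrix (ρ i)) :
    ‖(Fintype.card d : ℂ) ^ k * ∫ U : unitaryGroup d ℂ, outcomeDensity y ρ U ∂μ - 1‖ ≤
      4 * (k : ℝ) ^ 2 / Fintype.card d * (1 + permutedOverlap y) + permutedOverlap y := by
  choose p u hp hsum hu hdecomp using fun i => (hρ i).exists_eq_sum_vecMulVec
  have hmix : (Fintype.card d : ℂ) ^ k * ∫ U : unitaryGroup d ℂ, outcomeDensity y ρ U ∂μ =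
      ∑ f : Fin k → d, (∏ i, p i (f i)) • ((Fintype.card d : ℂ) ^ k *
        unitaryMoment μ (star y) (fun i => u i (f i)) (star fun i => u i (f i)) y) := by
    rw [funext hdecomp]
    simp only [outcomeDensity_sum_vecMulVec]
    rw [integral_finsetSum _ fun f _ => (integrable_unitaryMonomial ..).const_mul _, Finset.mul_sum]
    refine Finset.sum_congr rfl fun f _ => ?_
    rw [integral_const_mul, mul_left_comm, Complex.real_smul, Complex.ofReal_prod, unitaryMoment]
  rw [hmix, ← mem_closedBall_iff_norm]
  refine (convex_closedBall _ _).sum_mem (fun f _ => Finset.prod_nonneg fun i _ => hp i (f i)) ?_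
    fun f _ => mem_closedBall_iff_norm.mpr
      (norm_card_pow_mul_unitaryMoment_sub_one_le hk hy fun i => hu i (f i))
  rw [← Fintype.prod_sum]
  exact Finset.prod_eq_one fun i _ => hsum i

end OutcomeDensity

section PermutationSupport

open Equiv.Perm

variable {α : Type*} [Fintype α] [DecidableEq α]

lemma card_filter_support_eq_le (T : Finset α) :
    (Finset.univ.filter fun σ : Equiv.Perm α => σ.support = T).card ≤ T.card.factorial := by
  have hfix : Fintype.card {σ : Equiv.Perm α // ∀ a, a ∉ T → σ a = a} = T.card.factorial := by
    rw [← Fintype.card_congr (Equiv.Perm.subtypeEquivSubtypePerm (· ∈ T)), Fintype.card_perm,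
      Fintype.card_coe]
  rw [← hfix, Fintype.card_subtype]
  refine Finset.card_le_card (Finset.monotone_filter_right _ fun σ _ hσ a ha => ?_)
  rwa [← hσ, notMem_support] at ha

lemma card_filter_card_support_eq_le (j : ℕ) :
    (Finset.univ.filter fun σ : Equiv.Perm α => σ.support.card = j).card ≤
      Fintype.card α ^ j := by
  have hmaps : ∀ σ ∈ Finset.univ.filter fun σ : Equiv.Perm α => σ.support.card = j,
      σ.support ∈ Finset.univ.powersetCard j := fun σ hσ =>
    Finset.mem_powersetCard.mpr ⟨Finset.subset_univ _, (Finset.mem_filter.mp hσ).2⟩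
  calc _ ≤ j.factorial * (Finset.univ.powersetCard j : Finset (Finset α)).card := by
        refine Finset.card_le_mul_card_image_of_maps_to hmaps _ fun T hT => ?_
        rw [← (Finset.mem_powersetCard.mp hT).2]
        refine (Finset.card_le_card ?_).trans (card_filter_support_eq_le T)
        exact Finset.filter_subset_filter _ (Finset.subset_univ _)
    _ = (Fintype.card α).descFactorial j := by
        rw [Finset.card_powersetCard, Finset.card_univ, Nat.descFactorial_eq_factorial_mul_choose]
    _ ≤ Fintype.card α ^ j := Nat.descFactorial_le_pow _ _

lemma sum_pow_card_support_erase_one_le {q : ℝ} (hq : 0 ≤ q) (hqα : Fintype.card α * q ≤ 1 / 2) :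
    ∑ σ ∈ Finset.univ.erase (1 : Equiv.Perm α), q ^ σ.support.card ≤
      2 * (Fintype.card α * q) ^ 2 := by
  have hmaps : ∀ σ ∈ Finset.univ.erase (1 : Equiv.Perm α),
      σ.support.card ∈ Finset.Ico 2 (Fintype.card α + 1) := fun σ hσ =>
    Finset.mem_Ico.mpr ⟨two_le_card_support_of_ne_one (Finset.ne_of_mem_erase hσ),
      Nat.lt_succ_of_le (Finset.card_le_univ _)⟩
  calc _ = ∑ j ∈ Finset.Ico 2 (Fintype.card α + 1),
          ∑ σ ∈ Finset.univ.erase (1 : Equiv.Perm α) with σ.support.card = j, q ^ j := by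
        rw [← Finset.sum_fiberwise_of_maps_to' hmaps]
    _ ≤ ∑ j ∈ Finset.Ico 2 (Fintype.card α + 1), (Fintype.card α * q) ^ j := by
        refine Finset.sum_le_sum fun j _ => ?_
        rw [Finset.sum_const, nsmul_eq_mul, mul_pow]
        gcongr
        exact_mod_cast (Finset.card_le_card (Finset.filter_subset_filter _
          (Finset.erase_subset _ _))).trans (card_filter_card_support_eq_le j)
    _ ≤ (Fintype.card α * q) ^ 2 / (1 - Fintype.card α * q) :=
        geom_sum_Ico_le_of_lt_one (by positivity) (by linarith)
    _ ≤ 2 * (Fintype.card α * q) ^ 2 := by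
        rw [div_le_iff₀ (by linarith)]
        nlinarith [sq_nonneg (Fintype.card α * q)]

/- Each pair `{i, σ i}` with `i ≠ σ i` is charged to the larger of its two entries. -/
lemma prod_ite_lt_mul_prod_ite_lt {α M : Type*} [Fintype α] [LinearOrder α] [CommMonoid M]
    (σ : Equiv.Perm α) {g : α → α → M} (hdiag : ∀ i, g i i = 1) (hsymm : ∀ i j, g i j = g j i) :
    ∏ i, ((if σ i < i then g i (σ i) else 1) * (if σ⁻¹ i < i then g i (σ⁻¹ i) else 1)) =
      ∏ i, g i (σ i) := by
  rw [Finset.prod_mul_distrib, ← Equiv.prod_comp σ fun i => if σ⁻¹ i < i then g i (σ⁻¹ i) else 1,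
    ← Finset.prod_mul_distrib]
  refine Finset.prod_congr rfl fun i _ => ?_
  rw [coe_inv, σ.symm_apply_apply, hsymm (σ i)]
  rcases lt_trichotomy (σ i) i with h | h | h
  · rw [if_pos h, if_neg h.not_gt, mul_one]
  · rw [h, if_neg (lt_irrefl i), mul_one, hdiag]
  · rw [if_neg h.not_gt, if_pos h, one_mul]

lemma prod_ite_lt_eq_pow_card_support {α M : Type*} [Fintype α] [LinearOrder α]
    [CommMonoid M] (σ : Equiv.Perm α) (q : M) :
    ∏ i, ((if σ i < i then q else 1) * (if σ⁻¹ i < i then q else 1)) = q ^ σ.support.card := by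
  have h := prod_ite_lt_mul_prod_ite_lt σ (g := fun i j => if j = i then 1 else q)
    (fun i => if_pos rfl) fun i j => by simp only [eq_comm]
  rw [Finset.prod_ite, Finset.prod_const_one, one_mul, Finset.prod_const] at h
  rw [support, ← h]
  refine Finset.prod_congr rfl fun i _ => ?_
  congr 1 <;> exact if_ctx_congr Iff.rfl (fun hi => (if_neg hi.ne).symm) fun _ => rfl

end PermutationSupport

lemma update_eq_of_dependsOn_Iic {α β : Type*} {n : ℕ} {g : (Fin n → α) → β} {i j : Fin n}
    (hg : DependsOn g (Set.Iic j)) (hji : j < i) (s : Fin n → α) (t : α) :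
    g (Function.update s i t) = g s :=
  hg fun _ hl => Function.update_of_ne (hl.trans_lt hji).ne _ _

section Adapted

variable {α : Type*} [Fintype α]

lemma sum_prod_le_of_adapted {n : ℕ} {f : Fin n → (Fin n → α) → ℝ} {c : Fin n → ℝ}
    (hc : ∀ i, 0 ≤ c i) (hf : ∀ i s, 0 ≤ f i s) (hdep : ∀ i, DependsOn (f i) (Set.Iic i))
    (hsum : ∀ i s, ∑ t, f i (Function.update s i t) ≤ c i) :
    ∑ s, ∏ i, f i s ≤ ∏ i, c i := by
  induction n with
  | zero => simp
  | succ n ih =>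
    rcases isEmpty_or_nonempty α with _ | ⟨⟨a₀⟩⟩
    · simpa using Finset.prod_nonneg fun i _ => hc i
    have htail (a : α) : ∑ s : Fin n → α, ∏ i : Fin n, f i.succ (Fin.cons a s) ≤
        ∏ i : Fin n, c i.succ := by
      refine ih (f := fun i s => f i.succ (Fin.cons a s)) (fun i => hc _) (fun i s => hf _ _)
        (fun i s s' h => hdep _ fun j => ?_) fun i s => ?_
      · exact Fin.cases (fun _ => rfl) (fun j hj => h j (Fin.succ_le_succ_iff.mp hj)) j
      · simpa only [Fin.cons_update] using hsum i.succ (Fin.cons a s)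
    have hhead (a : α) (s : Fin n → α) : f 0 (Fin.cons a s) = f 0 (Fin.cons a fun _ => a₀) :=
      hdep 0 fun j hj => by rw [Fin.le_zero_iff.mp hj, Fin.cons_zero, Fin.cons_zero]
    rw [← (Fin.consEquiv fun _ => α).sum_comp, Fintype.sum_prod_type]
    calc _ = ∑ a, f 0 (Fin.cons a fun _ => a₀) *
          ∑ s : Fin n → α, ∏ i : Fin n, f i.succ (Fin.cons a s) := by
          simp only [Fin.consEquiv, Equiv.coe_fn_mk, Fin.prod_univ_succ, hhead, Finset.mul_sum]
      _ ≤ ∑ a, f 0 (Fin.cons a fun _ => a₀) * ∏ i : Fin n, c i.succ := by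
          gcongr with a
          · exact hf _ _
          · exact htail a
      _ ≤ ∏ i, c i := by
          rw [← Finset.sum_mul, Fin.prod_univ_succ]
          gcongr
          · exact Finset.prod_nonneg fun i _ => hc _
          · simpa only [Fin.update_cons_zero] using hsum 0 (Fin.cons a₀ fun _ => a₀)

lemma sum_mul_prod_le_of_adapted {k : ℕ} {f₀ : (Fin (k + 1) → α) → ℝ}
    {f : Fin k → (Fin (k + 1) → α) → ℝ} {c : Fin k → ℝ} (hf₀ : ∀ s, 0 ≤ f₀ s)
    (hdep₀ : DependsOn f₀ {0}) (hsum₀ : ∀ s, ∑ t, f₀ (Function.update s 0 t) ≤ 1)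
    (hc : ∀ i, 0 ≤ c i) (hf : ∀ i s, 0 ≤ f i s) (hdep : ∀ i, DependsOn (f i) (Set.Iic i.succ))
    (hsum : ∀ i s, ∑ t, f i (Function.update s i.succ t) ≤ c i) :
    ∑ s, f₀ s * ∏ i, f i s ≤ ∏ i, c i := by
  have h := sum_prod_le_of_adapted (f := Fin.cons f₀ f) (c := Fin.cons 1 c)
    (Fin.cases zero_le_one hc) (Fin.cases hf₀ hf)
    (Fin.cases (hdep₀.mono (Set.singleton_subset_iff.mpr Set.self_mem_Iic)) hdep)
    (Fin.cases hsum₀ hsum)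
  simpa only [Fin.prod_univ_succ, Fin.cons_zero, Fin.cons_succ, one_mul] using h

end Adapted

lemma sum_mul_mul_le_of_sum_mul_sq_le {ι : Type*} [Fintype ι] {w A B : ι → ℝ} {a b : ℝ}
    (hw : ∀ t, 0 ≤ w t) (ha : 0 ≤ a) (hb : 0 ≤ b) (hA : ∑ t, w t * A t ^ 2 ≤ a ^ 2)
    (hB : ∑ t, w t * B t ^ 2 ≤ b ^ 2) :
    ∑ t, w t * (A t * B t) ≤ a * b := by
  refine le_of_sq_le_sq ?_ (mul_nonneg ha hb)
  calc _ = (∑ t, (√(w t) * A t) * (√(w t) * B t)) ^ 2 := by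
        refine congrArg (· ^ 2) (Finset.sum_congr rfl fun t _ => ?_)
        rw [mul_mul_mul_comm, Real.mul_self_sqrt (hw t)]
    _ ≤ (∑ t, (√(w t) * A t) ^ 2) * ∑ t, (√(w t) * B t) ^ 2 :=
        Finset.sum_mul_sq_le_sq_mul_sq _ _ _
    _ = (∑ t, w t * A t ^ 2) * ∑ t, w t * B t ^ 2 := by
        simp only [mul_pow, Real.sq_sqrt (hw _)]
    _ ≤ a ^ 2 * b ^ 2 := mul_le_mul hA hB
        (Finset.sum_nonneg fun t _ => mul_nonneg (hw t) (sq_nonneg _)) (sq_nonneg _)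
    _ = (a * b) ^ 2 := (mul_pow ..).symm

section RankOnePovm

variable {d ι : Type*} [Fintype d] [DecidableEq d] [Fintype ι]

/-- The rank-one measurement `{w t |v t⟩⟨v t|}`: nonnegative weights and unit vectors resolving the
identity. -/
structure IsRankOnePovm (w : ι → ℝ) (v : ι → d → ℂ) : Prop where
  weight_nonneg : ∀ t, 0 ≤ w t
  star_dotProduct_self_eq_one : ∀ t, star (v t) ⬝ᵥ v t = 1
  sum_smul_vecMulVec : ∑ t, (w t : ℂ) • vecMulVec (v t) (star (v t)) = 1

namespace IsRankOnePovm

variable {w : ι → ℝ} {v : ι → d → ℂ} (h : IsRankOnePovm w v)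
include h

lemma sum_weight_mul_dotProduct_mulVec (ρ : Matrix d d ℂ) :
    ∑ t, (w t : ℂ) * (star (v t) ⬝ᵥ ρ *ᵥ v t) = ρ.trace := by
  conv_rhs => rw [← mul_one ρ, ← h.sum_smul_vecMulVec, Finset.mul_sum, trace_sum]
  refine Finset.sum_congr rfl fun t _ => ?_
  rw [mul_smul_comm, trace_smul, mul_vecMulVec, trace_vecMulVec, dotProduct_comm, smul_eq_mul]

lemma sum_weight : ∑ t, w t = Fintype.card d := by
  have hone := h.sum_weight_mul_dotProduct_mulVec 1
  simp only [one_mulVec, h.star_dotProduct_self_eq_one, mul_one, trace_one] at hone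
  exact_mod_cast hone

lemma sum_weight_mul_norm_dotProduct_mulVec {ρ : Matrix d d ℂ} (hρ : IsDensityMatrix ρ) :
    ∑ t, w t * ‖star (v t) ⬝ᵥ ρ *ᵥ v t‖ = 1 := by
  apply Complex.ofReal_injective
  rw [Complex.ofReal_one, ← hρ.trace_eq_one, ← h.sum_weight_mul_dotProduct_mulVec ρ,
    Complex.ofReal_sum]
  refine Finset.sum_congr rfl fun t _ => ?_
  rw [Complex.ofReal_mul]
  congr 1
  exact RCLike.norm_of_nonneg' (hρ.posSemidef.dotProduct_mulVec_nonneg (v t))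

lemma sum_weight_mul_norm_star_dotProduct_sq {a : d → ℂ} (ha : star a ⬝ᵥ a = 1) :
    ∑ t, w t * ‖star (v t) ⬝ᵥ a‖ ^ 2 = 1 := by
  have hρ : IsDensityMatrix (vecMulVec a (star a)) :=
    ⟨posSemidef_vecMulVec_self_star a, by rw [trace_vecMulVec, dotProduct_comm, ha]⟩
  rw [← h.sum_weight_mul_norm_dotProduct_mulVec hρ]
  refine Finset.sum_congr rfl fun t _ => ?_
  rw [vecMulVec_mulVec, op_smul_eq_smul, dotProduct_smul, smul_eq_mul, norm_mul,
    norm_star_dotProduct_comm a, sq]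

end IsRankOnePovm

end RankOnePovm

section AdaptivePovm

variable {d α : Type*} [Fintype d] [DecidableEq d] [Fintype α] {n : ℕ}

/-- An adaptive sequence of rank-one measurements. The outcomes are collected in `s`; the weights
and vectors of step `i` may depend only on the outcomes up to `s i`, and form a rank-one
measurement indexed by `s i` once the earlier outcomes are fixed. -/
structure IsAdaptivePovm (lam : Fin n → (Fin n → α) → ℝ) (y : Fin n → (Fin n → α) → d → ℂ) :
    Prop where
  isRankOnePovm : ∀ i s, IsRankOnePovm (fun t => lam i (Function.update s i t))
    fun t => y i (Function.update s i t)
  dependsOn_weight : ∀ i, DependsOn (lam i) (Set.Iic i)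
  dependsOn_vector : ∀ i, DependsOn (y i) (Set.Iic i)

/-- The overlap of the vector of step `i` with that of an earlier step `j`, and `1` if `j` is not
earlier than `i`. -/
noncomputable def pastOverlap (y : Fin n → (Fin n → α) → d → ℂ) (i j : Fin n) (s : Fin n → α) : ℝ :=
  if j < i then ‖star (y i s) ⬝ᵥ y j s‖ else 1

omit [DecidableEq d] [Fintype α] in
lemma pastOverlap_nonneg (y : Fin n → (Fin n → α) → d → ℂ) (i j : Fin n) (s : Fin n → α) :
    0 ≤ pastOverlap y i j s := by
  unfold pastOverlap
  positivity

namespace IsAdaptivePovm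

variable {lam : Fin n → (Fin n → α) → ℝ} {y : Fin n → (Fin n → α) → d → ℂ}
  (h : IsAdaptivePovm lam y)
include h

lemma weight_nonneg (i : Fin n) (s : Fin n → α) : 0 ≤ lam i s := by
  simpa only [Function.update_eq_self] using (h.isRankOnePovm i s).weight_nonneg (s i)

lemma star_dotProduct_self_eq_one (i : Fin n) (s : Fin n → α) : star (y i s) ⬝ᵥ y i s = 1 := by
  simpa only [Function.update_eq_self] using (h.isRankOnePovm i s).star_dotProduct_self_eq_one (s i)

lemma dependsOn_pastOverlap (i j : Fin n) : DependsOn (pastOverlap y i j) (Set.Iic i) := by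
  intro s s' hs
  refine if_ctx_congr Iff.rfl (fun hji => ?_) fun _ => rfl
  rw [h.dependsOn_vector i hs, h.dependsOn_vector j fun l hl => hs l (le_trans hl hji.le)]

lemma sum_weight_div_card_mul_pastOverlap_sq [Nonempty d] (i j : Fin n) (s : Fin n → α) :
    ∑ t, lam i (Function.update s i t) / Fintype.card d *
        pastOverlap y i j (Function.update s i t) ^ 2 =
      (if j < i then (√(Fintype.card d))⁻¹ else 1) ^ 2 := by
  have hcard : (Fintype.card d : ℝ) ≠ 0 := Nat.cast_ne_zero.mpr Fintype.card_ne_zero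
  simp only [div_mul_eq_mul_div, ← Finset.sum_div]
  unfold pastOverlap
  split_ifs with hji
  · simp only [update_eq_of_dependsOn_Iic (h.dependsOn_vector j) hji]
    rw [(h.isRankOnePovm i s).sum_weight_mul_norm_star_dotProduct_sq
      (h.star_dotProduct_self_eq_one j s), inv_pow, Real.sq_sqrt (Nat.cast_nonneg _), one_div]
  · simp only [one_pow, mul_one]
    rw [(h.isRankOnePovm i s).sum_weight, div_self hcard]

end IsAdaptivePovm

end AdaptivePovm

section OutcomeLaws

variable {d α : Type*} [Fintype d] [DecidableEq d] {k : ℕ}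

/-- The probability `Pr(s₀)` of the first outcome when the basis state `e` is measured. -/
noncomputable def initialWeight (lam : Fin (k + 1) → (Fin (k + 1) → α) → ℝ)
    (y : Fin (k + 1) → (Fin (k + 1) → α) → d → ℂ) (e : d) (s : Fin (k + 1) → α) : ℝ :=
  ‖y 0 s e‖ ^ 2 * lam 0 s

/-- The law `P_k` of the outcomes when every state after the first is maximally mixed. -/
noncomputable def mixedOutcomeLaw (lam : Fin (k + 1) → (Fin (k + 1) → α) → ℝ)
    (y : Fin (k + 1) → (Fin (k + 1) → α) → d → ℂ) (e : d) (s : Fin (k + 1) → α) : ℝ :=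
  initialWeight lam y e s * ((Fintype.card d : ℝ) ^ k)⁻¹ * ∏ i : Fin k, lam i.succ s

/-- The law `Q_k` of the outcomes when the states `sig i` are all rotated by the same unitary,
drawn from `μ`. It is real, but it is kept complex to avoid taking real parts. -/
noncomputable def haarOutcomeLaw (μ : Measure (unitaryGroup d ℂ))
    (lam : Fin (k + 1) → (Fin (k + 1) → α) → ℝ) (y : Fin (k + 1) → (Fin (k + 1) → α) → d → ℂ)
    (sig : Fin k → (Fin (k + 1) → α) → Matrix d d ℂ) (e : d) (s : Fin (k + 1) → α) : ℂ :=
  initialWeight lam y e s * ∫ U : unitaryGroup d ℂ,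
    ∏ i : Fin k, (star (y i.succ s) ⬝ᵥ (U.1 * sig i s * U.1ᴴ) *ᵥ y i.succ s * (lam i.succ s : ℂ)) ∂μ

variable {lam : Fin (k + 1) → (Fin (k + 1) → α) → ℝ} {y : Fin (k + 1) → (Fin (k + 1) → α) → d → ℂ}
  {sig : Fin k → (Fin (k + 1) → α) → Matrix d d ℂ} {μ : Measure (unitaryGroup d ℂ)}

omit [DecidableEq d] in
lemma mixedOutcomeLaw_eq (e : d) (s : Fin (k + 1) → α) :
    mixedOutcomeLaw lam y e s =
      initialWeight lam y e s * ∏ i : Fin k, lam i.succ s / Fintype.card d := by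
  rw [mixedOutcomeLaw, Finset.prod_div_distrib, Finset.prod_const, Finset.card_univ,
    Fintype.card_fin, mul_assoc, div_eq_inv_mul]

lemma haarOutcomeLaw_eq (e : d) (s : Fin (k + 1) → α) :
    haarOutcomeLaw μ lam y sig e s = mixedOutcomeLaw lam y e s * ((Fintype.card d : ℂ) ^ k *
      ∫ U : unitaryGroup d ℂ, outcomeDensity (fun i : Fin k => y i.succ s) (sig · s) U ∂μ) := by
  have : Nonempty d := ⟨e⟩
  have hcard : (Fintype.card d : ℂ) ^ k ≠ 0 :=
    pow_ne_zero _ (Nat.cast_ne_zero.mpr Fintype.card_ne_zero)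
  simp only [haarOutcomeLaw, mixedOutcomeLaw, Finset.prod_mul_distrib, integral_mul_const,
    outcomeDensity]
  push_cast
  field_simp

variable [Fintype α]

namespace IsAdaptivePovm

section InitialWeight

variable (h : IsAdaptivePovm lam y) (e : d)
include h

lemma initialWeight_nonneg (s : Fin (k + 1) → α) : 0 ≤ initialWeight lam y e s :=
  mul_nonneg (sq_nonneg _) (h.weight_nonneg 0 s)

lemma dependsOn_initialWeight : DependsOn (initialWeight lam y e) {0} := by
  intro s s' hs
  have hs' : ∀ l ∈ Set.Iic (0 : Fin (k + 1)), s l = s' l := fun l hl => hs l (Fin.le_zero_iff.mp hl)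
  rw [initialWeight, initialWeight, h.dependsOn_vector 0 hs', h.dependsOn_weight 0 hs']

lemma sum_initialWeight (s : Fin (k + 1) → α) :
    ∑ t, initialWeight lam y e (Function.update s 0 t) = 1 := by
  rw [← (h.isRankOnePovm 0 s).sum_weight_mul_norm_star_dotProduct_sq (a := Pi.single e 1) (by simp)]
  refine Finset.sum_congr rfl fun t _ => ?_
  rw [initialWeight, dotProduct_single_one, Pi.star_apply, norm_star, mul_comm]

lemma sum_initialWeight_mul_prod_le {f : Fin k → (Fin (k + 1) → α) → ℝ} {c : Fin k → ℝ}
    (hc : ∀ i, 0 ≤ c i) (hf : ∀ i s, 0 ≤ f i s) (hdep : ∀ i, DependsOn (f i) (Set.Iic i.succ))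
    (hsum : ∀ i s, ∑ t, f i (Function.update s i.succ t) ≤ c i) :
    ∑ s, initialWeight lam y e s * ∏ i, f i s ≤ ∏ i, c i :=
  sum_mul_prod_le_of_adapted (h.initialWeight_nonneg e) (h.dependsOn_initialWeight e)
    (fun s => (h.sum_initialWeight e s).le) hc hf hdep hsum

end InitialWeight

section MixedOutcomeLaw

variable (h : IsAdaptivePovm lam y) (e : d)
include h

lemma mixedOutcomeLaw_nonneg (s : Fin (k + 1) → α) : 0 ≤ mixedOutcomeLaw lam y e s :=
  mul_nonneg (mul_nonneg (h.initialWeight_nonneg e s) (by positivity))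
    (Finset.prod_nonneg fun i _ => h.weight_nonneg _ s)

/- Summing over the outcomes from the last to the first, each step meets at most two overlaps with
earlier vectors; by Cauchy–Schwarz they contribute a factor `D ^ (-1/2)` each. -/
lemma sum_mixedOutcomeLaw_mul_prod_norm_le (σ : Equiv.Perm (Fin k)) :
    ∑ s, mixedOutcomeLaw lam y e s * ∏ i : Fin k, ‖star (y i.succ s) ⬝ᵥ y (σ i).succ s‖ ≤
      (√(Fintype.card d))⁻¹ ^ σ.support.card := by
  have : Nonempty d := ⟨e⟩
  have hw (i : Fin k) (s : Fin (k + 1) → α) : 0 ≤ lam i.succ s / Fintype.card d :=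
    div_nonneg (h.weight_nonneg _ s) (Nat.cast_nonneg _)
  have hoverlaps (s : Fin (k + 1) → α) :
      ∏ i : Fin k, (pastOverlap y i.succ (σ i).succ s * pastOverlap y i.succ (σ⁻¹ i).succ s) =
        ∏ i : Fin k, ‖star (y i.succ s) ⬝ᵥ y (σ i).succ s‖ := by
    simp only [pastOverlap, Fin.succ_lt_succ_iff]
    exact prod_ite_lt_mul_prod_ite_lt σ (g := fun i j => ‖star (y i.succ s) ⬝ᵥ y j.succ s‖)
      (fun i => by rw [h.star_dotProduct_self_eq_one, norm_one])
      fun i j => norm_star_dotProduct_comm _ _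
  simp only [mixedOutcomeLaw_eq, mul_assoc, ← hoverlaps, ← Finset.prod_mul_distrib]
  rw [← prod_ite_lt_eq_pow_card_support]
  refine h.sum_initialWeight_mul_prod_le e (fun i => by positivity) (fun i s => ?_)
    (fun i s s' hs => ?_) fun i s => ?_
  · exact mul_nonneg (hw i s) (mul_nonneg (pastOverlap_nonneg ..) (pastOverlap_nonneg ..))
  · rw [h.dependsOn_weight _ hs, h.dependsOn_pastOverlap _ _ hs, h.dependsOn_pastOverlap _ _ hs]
  · refine sum_mul_mul_le_of_sum_mul_sq_le (fun t => hw _ _) (by positivity) (by positivity) ?_ ?_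
    · simpa only [Fin.succ_lt_succ_iff] using
        (h.sum_weight_div_card_mul_pastOverlap_sq i.succ (σ i).succ s).le
    · simpa only [Fin.succ_lt_succ_iff] using
        (h.sum_weight_div_card_mul_pastOverlap_sq i.succ (σ⁻¹ i).succ s).le

lemma sum_mixedOutcomeLaw_le_one : ∑ s, mixedOutcomeLaw lam y e s ≤ 1 := by
  simpa only [Equiv.Perm.one_apply, h.star_dotProduct_self_eq_one, norm_one, Finset.prod_const_one,
    mul_one, Equiv.Perm.support_one, Finset.card_empty, pow_zero] using
    h.sum_mixedOutcomeLaw_mul_prod_norm_le e 1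

lemma sum_mixedOutcomeLaw_mul_permutedOverlap_le (hk : 4 * (k : ℝ) ^ 2 ≤ Fintype.card d) :
    ∑ s, mixedOutcomeLaw lam y e s * permutedOverlap (fun i : Fin k => y i.succ s) ≤
      2 * ((k : ℝ) ^ 2 / Fintype.card d) := by
  have : Nonempty d := ⟨e⟩
  have hcard : (0 : ℝ) < Fintype.card d := Nat.cast_pos.mpr Fintype.card_pos
  have hsq : (k * (√(Fintype.card d : ℝ))⁻¹) ^ 2 = (k : ℝ) ^ 2 / Fintype.card d := by
    rw [mul_pow, inv_pow, Real.sq_sqrt hcard.le, div_eq_mul_inv]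
  have hsmall : k * (√(Fintype.card d : ℝ))⁻¹ ≤ 1 / 2 := by
    refine le_of_sq_le_sq ?_ (by norm_num)
    rw [hsq, div_le_iff₀ hcard]
    linarith
  calc _ = ∑ σ ∈ Finset.univ.erase (1 : Equiv.Perm (Fin k)), ∑ s, mixedOutcomeLaw lam y e s *
          ∏ i : Fin k, ‖star (y i.succ s) ⬝ᵥ y (σ i).succ s‖ := by
        simp only [permutedOverlap, Finset.mul_sum]
        exact Finset.sum_comm
    _ ≤ ∑ σ ∈ Finset.univ.erase (1 : Equiv.Perm (Fin k)),
          (√(Fintype.card d : ℝ))⁻¹ ^ σ.support.card :=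
        Finset.sum_le_sum fun σ _ => h.sum_mixedOutcomeLaw_mul_prod_norm_le e σ
    _ ≤ 2 * ((k : ℝ) ^ 2 / Fintype.card d) := by
        rw [← hsq]
        simpa only [Fintype.card_fin] using sum_pow_card_support_erase_one_le (α := Fin k)
          (inv_nonneg.mpr (Real.sqrt_nonneg _)) (by rwa [Fintype.card_fin])

end MixedOutcomeLaw

section HaarOutcomeLaw

variable (h : IsAdaptivePovm lam y) (e : d) [IsProbabilityMeasure μ]
include h

lemma norm_mixedOutcomeLaw_sub_haarOutcomeLaw_le [μ.IsMulLeftInvariant]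
    (hk : 4 * (k : ℝ) ^ 2 ≤ Fintype.card d) (hsig : ∀ i s, IsDensityMatrix (sig i s))
    (s : Fin (k + 1) → α) :
    ‖(mixedOutcomeLaw lam y e s : ℂ) - haarOutcomeLaw μ lam y sig e s‖ ≤
      mixedOutcomeLaw lam y e s *
        (4 * (k : ℝ) ^ 2 / Fintype.card d * (1 + permutedOverlap (fun i : Fin k => y i.succ s)) +
          permutedOverlap (fun i : Fin k => y i.succ s)) := by
  rw [haarOutcomeLaw_eq, ← mul_one_sub, norm_mul, norm_sub_rev,
    Complex.norm_of_nonneg (h.mixedOutcomeLaw_nonneg e s)]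
  gcongr
  · exact h.mixedOutcomeLaw_nonneg e s
  · exact norm_card_pow_mul_integral_outcomeDensity_sub_one_le hk
      (fun i => h.star_dotProduct_self_eq_one _ s) fun i => hsig i s

lemma sum_norm_mixedOutcomeLaw_sub_haarOutcomeLaw_le [μ.IsMulLeftInvariant]
    (hk : 4 * (k : ℝ) ^ 2 ≤ Fintype.card d) (hsig : ∀ i s, IsDensityMatrix (sig i s)) :
    ∑ s, ‖(mixedOutcomeLaw lam y e s : ℂ) - haarOutcomeLaw μ lam y sig e s‖ ≤
      8 * (k : ℝ) ^ 2 / Fintype.card d := by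
  have : Nonempty d := ⟨e⟩
  have hcard : (0 : ℝ) < Fintype.card d := Nat.cast_pos.mpr Fintype.card_pos
  set r : ℝ := (k : ℝ) ^ 2 / Fintype.card d with hr
  have hr_nonneg : 0 ≤ r := by positivity
  have hr_le : 4 * r ≤ 1 := by rwa [hr, ← mul_div_assoc, div_le_one hcard]
  have hoff := h.sum_mixedOutcomeLaw_mul_permutedOverlap_le e hk
  calc _ ≤ ∑ s, (4 * r * mixedOutcomeLaw lam y e s + (4 * r + 1) *
          (mixedOutcomeLaw lam y e s * permutedOverlap (fun i : Fin k => y i.succ s))) := by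
        refine Finset.sum_le_sum fun s _ =>
          (h.norm_mixedOutcomeLaw_sub_haarOutcomeLaw_le e hk hsig s).trans_eq ?_
        ring
    _ ≤ 4 * r * 1 + (4 * r + 1) * (2 * r) := by
        rw [Finset.sum_add_distrib, ← Finset.mul_sum, ← Finset.mul_sum]
        gcongr
        exact h.sum_mixedOutcomeLaw_le_one e
    _ ≤ 8 * r := by nlinarith
    _ = 8 * (k : ℝ) ^ 2 / Fintype.card d := (mul_div_assoc ..).symm

lemma sum_initialWeight_mul_prod_norm_le_one (hsig : ∀ i s, IsDensityMatrix (sig i s))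
    (hdep : ∀ i, DependsOn (sig i) (Set.Iic i.castSucc)) :
    ∑ s, initialWeight lam y e s *
      ∏ i : Fin k, (‖star (y i.succ s) ⬝ᵥ sig i s *ᵥ y i.succ s‖ * lam i.succ s) ≤ 1 := by
  refine (h.sum_initialWeight_mul_prod_le e (c := 1) (fun _ => zero_le_one)
    (fun i s => mul_nonneg (norm_nonneg _) (h.weight_nonneg _ s)) (fun i s s' hs => ?_)
    fun i s => ?_).trans_eq (by simp)
  · rw [h.dependsOn_weight _ hs, h.dependsOn_vector _ hs,
      hdep i fun j hj => hs j (le_trans hj Fin.castSucc_lt_succ.le)]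
  · simp only [update_eq_of_dependsOn_Iic (hdep i) Fin.castSucc_lt_succ, mul_comm (‖_‖)]
    exact ((h.isRankOnePovm i.succ s).sum_weight_mul_norm_dotProduct_mulVec (hsig i s)).le

lemma sum_norm_haarOutcomeLaw_le_one (hsig : ∀ i s, IsDensityMatrix (sig i s))
    (hdep : ∀ i, DependsOn (sig i) (Set.Iic i.castSucc)) :
    ∑ s, ‖haarOutcomeLaw μ lam y sig e s‖ ≤ 1 := by
  set F : (Fin (k + 1) → α) → unitaryGroup d ℂ → ℝ := fun s U => initialWeight lam y e s *
    ∏ i : Fin k, (‖star (y i.succ s) ⬝ᵥ (U.1 * sig i s * U.1ᴴ) *ᵥ y i.succ s‖ * lam i.succ s)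
  have hint (s : Fin (k + 1) → α) : Integrable (F s) μ :=
    integrable_of_continuous_of_compactSpace (by fun_prop)
  have hterm (s : Fin (k + 1) → α) : ‖haarOutcomeLaw μ lam y sig e s‖ ≤ ∫ U, F s U ∂μ := by
    rw [haarOutcomeLaw, norm_mul, Complex.norm_of_nonneg (h.initialWeight_nonneg e s),
      integral_const_mul]
    gcongr
    · exact h.initialWeight_nonneg e s
    · refine (norm_integral_le_integral_norm _).trans_eq ?_
      simp only [norm_prod, norm_mul, Complex.norm_of_nonneg (h.weight_nonneg _ s)]
  calc _ ≤ ∑ s, ∫ U, F s U ∂μ := Finset.sum_le_sum fun s _ => hterm s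
    _ = ∫ U, ∑ s, F s U ∂μ := (integral_finsetSum _ fun s _ => hint s).symm
    _ ≤ ∫ _, 1 ∂μ := by
        refine integral_mono (integrable_finsetSum _ fun s _ => hint s) (integrable_const 1)
          fun U => ?_
        exact h.sum_initialWeight_mul_prod_norm_le_one e
          (fun i s => (hsig i s).unitary_conj U) fun i s s' hs => by rw [hdep i hs]
    _ = 1 := by rw [integral_const, probReal_univ, one_smul]

end HaarOutcomeLaw

end IsAdaptivePovm

end OutcomeLaws

theorem simple_measurement_tvd_unitary_general {d α : Type*} [Fintype d] [DecidableEq d]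
    [Fintype α] {k : ℕ} {lam : Fin (k + 1) → (Fin (k + 1) → α) → ℝ}
    {y : Fin (k + 1) → (Fin (k + 1) → α) → d → ℂ}
    {sig : Fin k → (Fin (k + 1) → α) → Matrix d d ℂ} (h : IsAdaptivePovm lam y)
    (hsig : ∀ i s, IsDensityMatrix (sig i s)) (hdep : ∀ i, DependsOn (sig i) (Set.Iic i.castSucc))
    (e : d) (μ : Measure (unitaryGroup d ℂ)) [IsProbabilityMeasure μ] [μ.IsMulLeftInvariant] :
    ∑ s, ‖(mixedOutcomeLaw lam y e s : ℂ) - haarOutcomeLaw μ lam y sig e s‖ ≤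
      8 * (k : ℝ) ^ 2 / Fintype.card d := by
  rcases le_total (4 * (k : ℝ) ^ 2) (Fintype.card d : ℝ) with hk | hk
  · exact h.sum_norm_mixedOutcomeLaw_sub_haarOutcomeLaw_le e hk hsig
  · have : Nonempty d := ⟨e⟩
    have hcard : (0 : ℝ) < Fintype.card d := Nat.cast_pos.mpr Fintype.card_pos
    calc _ ≤ ∑ s, (mixedOutcomeLaw lam y e s + ‖haarOutcomeLaw μ lam y sig e s‖) := by
          refine Finset.sum_le_sum fun s _ => (norm_sub_le _ _).trans_eq ?_
          rw [Complex.norm_of_nonneg (h.mixedOutcomeLaw_nonneg e s)]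
      _ ≤ 1 + 1 := by
          rw [Finset.sum_add_distrib]
          exact add_le_add (h.sum_mixedOutcomeLaw_le_one e)
            (h.sum_norm_haarOutcomeLaw_le_one e hsig hdep)
      _ ≤ 8 * (k : ℝ) ^ 2 / Fintype.card d := by
          rw [le_div_iff₀ hcard]
          linarith

/-- (Lemma 3.2 of the paper, unitary case.)  For the adaptive simple
measurement data `y, λ, σ` on `ℓ` qubits (`D = 2^ℓ`), if `k < (2^ℓ/√6)^{4/7}` then the
distribution `Q_k(s) = Pr(s₀) ∫_{U(D)} ∏_{i=1}^k ⟨y^i|U σ^{i−1} U†|y^i⟩ λ^i dU` is close in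
total variation to `P_k(s) = Pr(s₀) D^{−k} ∏_{i=1}^k λ^i`:
`∑_s |P_k(s) − Q_k(s)| ≤ C k³/2^ℓ` for a universal constant `C > 0`. -/
theorem simple_measurement_tvd_unitary :
    ∃ C : ℝ, 0 < C ∧
      ∀ (ℓ k Dm : ℕ), 1 ≤ ℓ → 1 ≤ k → 1 ≤ Dm →
      (k : ℝ) < ((2 : ℝ) ^ ℓ / Real.sqrt 6) ^ ((4 : ℝ) / 7) →
      ∀ (y : Fin (k + 1) → (Fin (k + 1) → Fin Dm) → (Fin (2 ^ ℓ) → ℂ))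
        (lam : Fin (k + 1) → (Fin (k + 1) → Fin Dm) → ℝ)
        (sig : Fin k → (Fin (k + 1) → Fin Dm) → Matrix (Fin (2 ^ ℓ)) (Fin (2 ^ ℓ)) ℂ),
      (∀ i s, ∑ x, ‖y i s x‖ ^ 2 = 1) →
      (∀ i s, 0 < lam i s ∧ lam i s ≤ 1) →
      (∀ (i : Fin (k + 1)) (s s' : Fin (k + 1) → Fin Dm),
        (∀ j, j ≤ i → s j = s' j) → y i s = y i s') →
      (∀ (i : Fin (k + 1)) (s s' : Fin (k + 1) → Fin Dm),
        (∀ j, j ≤ i → s j = s' j) → lam i s = lam i s') →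
      (∀ (i : Fin (k + 1)) (s : Fin (k + 1) → Fin Dm),
        ∑ t : Fin Dm, (lam i (Function.update s i t) : ℂ) •
            Matrix.vecMulVec (y i (Function.update s i t)) (star (y i (Function.update s i t)))
          = (1 : Matrix (Fin (2 ^ ℓ)) (Fin (2 ^ ℓ)) ℂ)) →
      (∀ (i : Fin k) (s : Fin (k + 1) → Fin Dm),
        (sig i s).PosSemidef ∧ (sig i s).trace = 1) →
      (∀ (i : Fin k) (s s' : Fin (k + 1) → Fin Dm),
        (∀ j, j ≤ i.castSucc → s j = s' j) → sig i s = sig i s') →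
      ∀ (μ : Measure ↥(Matrix.unitaryGroup (Fin (2 ^ ℓ)) ℂ)),
        μ.IsHaarMeasure → IsProbabilityMeasure μ →
      ∑ s : Fin (k + 1) → Fin Dm,
        ‖((((‖y 0 s 0‖ ^ 2 * lam 0 s) * (((2 : ℝ) ^ ℓ) ^ k)⁻¹ *
              ∏ i : Fin k, lam i.succ s : ℝ)) : ℂ)
          - ((‖y 0 s 0‖ ^ 2 * lam 0 s : ℝ) : ℂ) *
              ∫ U : ↥(Matrix.unitaryGroup (Fin (2 ^ ℓ)) ℂ),
                ∏ i : Fin k,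
                  (star (y i.succ s) ⬝ᵥ ((U.1 * sig i s * (U.1)ᴴ) *ᵥ y i.succ s) *
                    (lam i.succ s : ℂ)) ∂μ‖
        ≤ C * (k : ℝ) ^ 3 / (2 : ℝ) ^ ℓ := by
  refine ⟨8, by norm_num, fun ℓ k Dm _ hk _ _ y lam sig hy hlam hy_dep hlam_dep hpovm hsig hsig_dep
    μ _ _ => ?_⟩
  have hadaptive : IsAdaptivePovm lam y :=
    ⟨fun i s => ⟨fun t => (hlam _ _).1.le, fun t => by
      rw [star_dotProduct_self, hy, Complex.ofReal_one], hpovm i s⟩, hlam_dep, hy_dep⟩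
  have hbound := simple_measurement_tvd_unitary_general hadaptive
    (fun i s => ⟨(hsig i s).1, (hsig i s).2⟩) hsig_dep 0 μ
  simp only [mixedOutcomeLaw, haarOutcomeLaw, initialWeight, Fintype.card_fin, Nat.cast_pow,
    Nat.cast_ofNat] at hbound
  refine hbound.trans ?_
  gcongr
  · exact_mod_cast hk
  · norm_num
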